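/- arXiv:1009.0029 — 2 statements merged into one kernel-verified Lean document; each statement's English description precedes it below -/
import Mathlib

section
/- Let K be a field and Q a finite acyclic quiver. If V and W are projective objects of the category of representations of Q over K whose value at every vertex is a finite-dimensional K-vector space, then the pointwise tensor product V ⊗ W is a projective object. -/
/-!
A projective representation is a retract of `K[S]`, where `S` is a set-valued representation
freely generated by elements at the vertices, and `K[S] ⊗ K[T] ≅ K[S × T]`. Free set-valued
representations of a quiver are those which are forests: every element is the image of at most one
element along at most one arrow, and going back along arrows terminates. Unlike freeness, being a
forest visibly passes from `S` and `T` to `S × T`. Maps out of a forest can be built by recursion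
from the roots, so forests are projective and so are their linearizations.
-/

open CategoryTheory MonoidalCategory

namespace QuiverRep

universe u v w

section Forest

variable {V : Type u} [Quiver.{v} V]

/-- The action of a single arrow on the elements of a set-valued representation. -/
def push (S : Paths V ⥤ Type w) {x y : V} (a : x ⟶ y) (s : S.obj x) : S.obj y :=
  S.map ((Paths.of V).map a) s

theorem app_push {S T : Paths V ⥤ Type w} (f : S ⟶ T) {x y : V} (a : x ⟶ y) (s : S.obj x) :
    f.app y (push S a s) = push T a (f.app x s) :=
  NatTrans.naturality_apply f ((Paths.of V).map a) s

/-- A set-valued representation is a forest if the graph whose vertices are its elements, with an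
edge from `s` to `push S a s` for each arrow `a`, is a disjoint union of rooted trees directed away
from their roots. -/
structure IsForest (S : Paths V ⥤ Type w) : Prop where
  push_injective (y : V) :
    Function.Injective fun d : Σ x : V, (x ⟶ y) × S.obj x ↦ push S d.2.1 d.2.2
  wellFounded : WellFounded fun d e : Σ x : V, S.obj x ↦ ∃ a : d.1 ⟶ e.1, push S a d.2 = e.2

namespace IsForest

variable {S T : Paths V ⥤ Type w}

theorem exists_rec (hS : IsForest S) {C : ∀ y : V, S.obj y → Type*} [∀ y s, Nonempty (C y s)]
    (step : ∀ {x y : V} (a : x ⟶ y) (s : S.obj x), C x s → C y (push S a s)) :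
    ∃ g : ∀ (y : V) (s : S.obj y), C y s,
      ∀ {x y : V} (a : x ⟶ y) (s : S.obj x), g y (push S a s) = step a s (g x s) := by
  classical
  let F (e : Σ y : V, S.obj y)
      (ih : ∀ d : Σ y : V, S.obj y, (∃ a : d.1 ⟶ e.1, push S a d.2 = e.2) → C d.1 d.2) :
      C e.1 e.2 :=
    if h : ∃ d : Σ x : V, (x ⟶ e.1) × S.obj x, push S d.2.1 d.2.2 = e.2 then
      h.choose_spec ▸ step h.choose.2.1 h.choose.2.2
        (ih ⟨h.choose.1, h.choose.2.2⟩ ⟨h.choose.2.1, h.choose_spec⟩)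
    else Classical.arbitrary _
  let g := hS.wellFounded.fix F
  refine ⟨fun y s ↦ g ⟨y, s⟩, fun {x y} a s ↦ ?_⟩
  have h : ∃ d : Σ x : V, (x ⟶ y) × S.obj x, push S d.2.1 d.2.2 = push S a s := ⟨⟨x, a, s⟩, rfl⟩
  have step_eq (d : Σ x : V, (x ⟶ y) × S.obj x) (hd : push S d.2.1 d.2.2 = push S a s) :
      (hd ▸ step d.2.1 d.2.2 (g ⟨d.1, d.2.2⟩) : C y (push S a s)) = step a s (g ⟨x, s⟩) := by
    obtain rfl : d = ⟨x, a, s⟩ := hS.push_injective y hd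
    rfl
  calc
    g ⟨y, push S a s⟩ = F ⟨y, push S a s⟩ fun d _ ↦ g d := hS.wellFounded.fix_eq F _
    _ = h.choose_spec ▸ step h.choose.2.1 h.choose.2.2 (g ⟨h.choose.1, h.choose.2.2⟩) := dif_pos h
    _ = step a s (g ⟨x, s⟩) := step_eq _ h.choose_spec

theorem projective (hS : IsForest S) : Projective S where
  factors {E X} f e he := by
    have lift_nonempty (y : V) (s : S.obj y) : Nonempty {t : E.obj y // e.app y t = f.app y s} :=
      have := (NatTrans.epi_iff_epi_app e).1 he y
      nonempty_subtype.2 (surjective_of_epi (e.app y) _)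
    obtain ⟨g, hg⟩ := hS.exists_rec (C := fun y s ↦ {t : E.obj y // e.app y t = f.app y s})
      fun a s t ↦ ⟨push E a t, by rw [app_push, app_push, t.2]⟩
    refine ⟨Paths.liftNatTrans (fun y ↦ ↾fun s ↦ (g y s).1) fun a ↦ ?_, ?_⟩
    · ext s
      exact congrArg Subtype.val (hg a s)
    · ext y s
      exact (g y s).2

theorem tensor (hS : IsForest S) (hT : IsForest T) : IsForest (S ⊗ T) where
  push_injective y := by
    rintro ⟨x, a, s, t⟩ ⟨x', a', s', t'⟩ h
    have hs : push S a s = push S a' s' := congrArg Prod.fst h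
    have ht : push T a t = push T a' t' := congrArg Prod.snd h
    cases hS.push_injective y (a₁ := ⟨x, a, s⟩) (a₂ := ⟨x', a', s'⟩) hs
    cases hT.push_injective y (a₁ := ⟨x, a, t⟩) (a₂ := ⟨x, a, t'⟩) ht
    rfl
  wellFounded :=
    Subrelation.wf (fun {_ _} ⟨a, h⟩ ↦ ⟨a, congrArg Prod.fst h⟩)
      (InvImage.wf (fun d : Σ x : V, (S ⊗ T).obj x ↦ (⟨d.1, d.2.1⟩ : Σ x : V, S.obj x))
        hS.wellFounded)

end IsForest

end Forest

section FreeForest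

variable {V : Type u} [Quiver.{v} V] [∀ x y : V, Small.{u} (x ⟶ y)] {B : V → Type u}

/-- Paths in a quiver whose starting vertex `x` carries a label in `B x`, indexed by their final
vertex. Arrows are shrunk so that the labelled paths live in the same universe as the labels. -/
inductive LabelledPath (B : V → Type u) : V → Type u
  | nil {y : V} (b : B y) : LabelledPath B y
  | cons {x y : V} (p : LabelledPath B x) (a : Shrink.{u} (x ⟶ y)) : LabelledPath B y

/-- The free set-valued representation on a family of generators `B y` at the vertices `y`. -/
noncomputable def freeForest (B : V → Type u) : Paths V ⥤ Type u :=
  Paths.lift { obj := LabelledPath B, map a := ↾fun p ↦ p.cons (equivShrink _ a) }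

theorem push_freeForest {x y : V} (a : x ⟶ y) (p : LabelledPath B x) :
    push (freeForest B) a p = p.cons (equivShrink _ a) :=
  ConcreteCategory.congr_hom (Paths.lift_toPath
    { obj := LabelledPath B, map a := ↾fun p ↦ p.cons (equivShrink _ a) } a) p

theorem isForest_freeForest (B : V → Type u) : IsForest (freeForest B) where
  push_injective y := by
    rintro ⟨x, a, p⟩ ⟨x', a', p'⟩ h
    obtain ⟨rfl, hp, ha⟩ := LabelledPath.cons.inj
      ((push_freeForest a p).symm.trans (h.trans (push_freeForest a' p')))
    cases hp
    cases (equivShrink _).injective (eq_of_heq ha)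
    rfl
  wellFounded := by
    refine ⟨fun ⟨y, p⟩ ↦ ?_⟩
    change LabelledPath B y at p
    induction p with
    | nil b =>
      refine ⟨_, fun ⟨x, q⟩ ⟨a, h⟩ ↦ ?_⟩
      cases (push_freeForest a q).symm.trans h
    | cons p a ih =>
      refine ⟨_, fun ⟨x, q⟩ ⟨a', h⟩ ↦ ?_⟩
      obtain ⟨rfl, hp, -⟩ := LabelledPath.cons.inj ((push_freeForest a' q).symm.trans h)
      cases hp
      exact ih

variable {X : Paths V ⥤ Type u}

/-- Transport along a labelled path of the element of `X` named by its label. -/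
noncomputable def LabelledPath.eval (f : ∀ y : V, B y → X.obj y) :
    ∀ {y : V}, LabelledPath B y → X.obj y
  | _, nil b => f _ b
  | _, cons p a => push X ((equivShrink _).symm a) (p.eval f)

theorem LabelledPath.eval_push (f : ∀ y : V, B y → X.obj y) {x y : V} (a : x ⟶ y)
    (p : LabelledPath B x) :
    LabelledPath.eval f (push (freeForest B) a p) = push X a (p.eval f) :=
  calc
    LabelledPath.eval f (push (freeForest B) a p) = (p.cons (equivShrink _ a)).eval f :=
      congrArg (LabelledPath.eval f) (push_freeForest a p)
    _ = push X a (p.eval f) :=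
      congrArg (push X · (p.eval f)) ((equivShrink _).symm_apply_apply a)

/-- The morphism from the free set-valued representation on `B` that extends a choice of images for
the generators. -/
noncomputable def freeForestDesc (f : ∀ y : V, B y → X.obj y) : freeForest B ⟶ X :=
  Paths.liftNatTrans (fun y ↦ ↾fun p : LabelledPath B y ↦ p.eval f) fun a ↦ by
    ext p
    exact LabelledPath.eval_push f a p

theorem epi_freeForestDesc {f : ∀ y : V, B y → X.obj y} (hf : ∀ y, Function.Surjective (f y)) :
    Epi (freeForestDesc f) :=
  (NatTrans.epi_iff_epi_app _).2 fun y ↦ (epi_iff_surjective _).2 fun s ↦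
    let ⟨b, hb⟩ := hf y s
    ⟨LabelledPath.nil b, hb⟩

end FreeForest

section Linearization

theorem epi_homEquiv_symm {C D : Type*} [Category* C] [Category* D] {F : C ⥤ D} {G : D ⥤ C}
    (adj : F ⊣ G) [G.Faithful] {X : C} {Y : D} (f : X ⟶ G.obj Y) [Epi f] :
    Epi ((adj.homEquiv X Y).symm f) := by
  have := adj.isLeftAdjoint
  rw [adj.homEquiv_counit]
  infer_instance

theorem preservesEpimorphisms_whiskeringRight (J : Type*) [Category* J] {C D : Type*} [Category* C]
    [Category* D] [Limits.HasPushouts C] (F : C ⥤ D) [F.PreservesEpimorphisms] :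
    ((Functor.whiskeringRight J C D).obj F).PreservesEpimorphisms where
  preserves f hf :=
    have := (NatTrans.epi_iff_epi_app f).1 hf
    have (j : J) : Epi ((((Functor.whiskeringRight J C D).obj F).map f).app j) :=
      F.map_epi (f.app j)
    NatTrans.epi_of_epi_app _

theorem projective_comp_free (K : Type u) [CommRing K] {C : Type*} [Category* C] {S : C ⥤ Type u}
    (hS : Projective S) : Projective (S ⋙ ModuleCat.free K) :=
  have := preservesEpimorphisms_whiskeringRight C (forget (ModuleCat.{u} K))
  ((ModuleCat.adj K).whiskerRight C).map_projective S hS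

theorem exists_isForest_retract (K : Type u) [CommRing K] {V : Type u} [Quiver.{v} V]
    [∀ x y : V, Small.{u} (x ⟶ y)] (X : Paths V ⥤ ModuleCat.{u} K) [Projective X] :
    ∃ S : Paths V ⥤ Type u, IsForest S ∧ Nonempty (Retract X (S ⋙ ModuleCat.free K)) := by
  let B (y : V) : Type u := X.obj y
  let π : freeForest B ⟶ X ⋙ forget (ModuleCat K) := freeForestDesc fun _ s ↦ s
  have : Epi π := epi_freeForestDesc fun _ ↦ Function.surjective_id
  let adj := (ModuleCat.adj K).whiskerRight (Paths V)
  let πK : freeForest B ⋙ ModuleCat.free K ⟶ X := (adj.homEquiv _ X).symm π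
  have : Epi πK := epi_homEquiv_symm adj π
  exact ⟨freeForest B, isForest_freeForest B,
    ⟨⟨Projective.factorThru (𝟙 X) πK, πK, Projective.factorThru_comp _ _⟩⟩⟩

end Linearization

end QuiverRep

open QuiverRep in
theorem tensor_projective_of_projective_general.{u, v}
    (K : Type u) [CommRing K] (V : Type u) [Quiver.{v} V] [∀ a b : V, Small.{u} (a ⟶ b)]
    (X Y : Paths V ⥤ ModuleCat.{u} K) (hX : Projective X) (hY : Projective Y) :
    Projective (X ⊗ Y) := by
  obtain ⟨S, hS, ⟨rX⟩⟩ := exists_isForest_retract K X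
  obtain ⟨T, hT, ⟨rY⟩⟩ := exists_isForest_retract K Y
  let free := ModuleCat.free K
  have e : (S ⋙ free) ⊗ (T ⋙ free) ≅ (S ⊗ T) ⋙ free :=
    Functor.Monoidal.μIso ((Functor.whiskeringRight (Paths V) _ _).obj free) S T
  have : Projective ((S ⋙ free) ⊗ (T ⋙ free)) :=
    Projective.of_iso e.symm (projective_comp_free K (hS.tensor hT).projective)
  have r : Retract (X ⊗ Y) ((S ⋙ free) ⊗ (T ⋙ free)) :=
    (rX.map (tensorRight Y)).trans (rY.map (tensorLeft (S ⋙ free)))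
  exact r.projective

/-- For a finite acyclic quiver `Q` and field `K`, the pointwise tensor
product of two projective representations (with finite-dimensional values) is projective. -/
theorem tensor_projective_of_projective
    (K : Type) [Field K] (V : Type) [Quiver V] [Fintype V]
    [∀ a b : V, Fintype (a ⟶ b)]
    (hacyclic : ∀ (v : V) (p : Quiver.Path v v), p.length = 0)
    (X Y : Paths V ⥤ ModuleCat K)
    (hXfd : ∀ v : Paths V, FiniteDimensional K (X.obj v))
    (hYfd : ∀ v : Paths V, FiniteDimensional K (Y.obj v))
    (hX : Projective X) (hY : Projective Y) :
    Projective (X ⊗ Y) := by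
  have (a b : V) : Small.{0} (a ⟶ b) := Countable.toSmall _
  exact tensor_projective_of_projective_general K V X Y hX hY
end

section
/- Let Q be a finite acyclic quiver and i a vertex of Q; let P = P_{Q,i} as a quiver over Q. Then every connected component of P ×_Q P contains exactly one vertex (p, q) such that p and q are paths from i with a common terminal vertex j that are either both trivial or have distinct last arrows; this vertex is the unique source of its component, and the component is isomorphic over Q to P_{W,j}, where W is the successor closure of j in Q (the subquiver of Q whose vertices are the terminal vertices of paths starting at j, with all arrows of Q between such vertices). -/
/-! ## Bundled quivers and quivers over a fixed quiver -/

/-- A (bundled) quiver: a set of vertices, a set of arrows, and source/target maps. -/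
structure BQuiv : Type 1 where
  V : Type
  E : Type
  s : E → V
  t : E → V

namespace BQuiv

/-- A morphism of quivers (a "coloring"). -/
@[ext]
structure Hom (A B : BQuiv) where
  onV : A.V → B.V
  onE : A.E → B.E
  hs : ∀ e : A.E, B.s (onE e) = onV (A.s e)
  ht : ∀ e : A.E, B.t (onE e) = onV (A.t e)

/-- Composition of morphisms of quivers. -/
def Hom.comp {A B C : BQuiv} (f : Hom A B) (g : Hom B C) : Hom A C where
  onV v := g.onV (f.onV v)
  onE e := g.onE (f.onE e)
  hs e := by rw [g.hs, f.hs]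
  ht e := by rw [g.ht, f.ht]

/-- `Q.IsPathFrom a b es` : the list of edges `es` forms a path from `a` to `b` in `Q`. -/
def IsPathFrom (Q : BQuiv) : Q.V → Q.V → List Q.E → Prop
  | a, b, [] => a = b
  | a, b, e :: es => Q.s e = a ∧ Q.IsPathFrom (Q.t e) b es

theorem IsPathFrom.snoc {Q : BQuiv} {a b : Q.V} {es : List Q.E}
    (h : Q.IsPathFrom a b es) {e : Q.E} (he : Q.s e = b) :
    Q.IsPathFrom a (Q.t e) (es ++ [e]) := by
  induction es generalizing a with
  | nil =>
      simp only [IsPathFrom] at h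
      subst h
      exact ⟨he, rfl⟩
  | cons f fs ih =>
      obtain ⟨h1, h2⟩ := h
      exact ⟨h1, ih h2⟩

theorem IsPathFrom.append {Q : BQuiv} {a b c : Q.V} {es fs : List Q.E}
    (h : Q.IsPathFrom a b es) (h' : Q.IsPathFrom b c fs) :
    Q.IsPathFrom a c (es ++ fs) := by
  induction es generalizing a with
  | nil =>
      simp only [IsPathFrom] at h
      subst h
      exact h'
  | cons f gs ih =>
      obtain ⟨h1, h2⟩ := h
      exact ⟨h1, ih h2⟩

/-- `Q` is acyclic if every path from a vertex to itself is trivial. -/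
def IsAcyclic (Q : BQuiv) : Prop :=
  ∀ (v : Q.V) (es : List Q.E), Q.IsPathFrom v v es → es = []

/-! ## Subquivers -/

/-- A subquiver of `Q`: a subset of vertices and a subset of arrows with endpoints in it. -/
structure Sub (Q : BQuiv) where
  verts : Set Q.V
  edges : Set Q.E
  src_mem : ∀ e ∈ edges, Q.s e ∈ verts
  tgt_mem : ∀ e ∈ edges, Q.t e ∈ verts

/-- The quiver underlying a subquiver. -/
def Sub.toBQuiv {Q : BQuiv} (T : Sub Q) : BQuiv where
  V := T.verts
  E := T.edges
  s e := ⟨Q.s e.1, T.src_mem e.1 e.2⟩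
  t e := ⟨Q.t e.1, T.tgt_mem e.1 e.2⟩

/-- The inclusion of a subquiver; `E_T` is `(T.toBQuiv, T.incl)` as a quiver over `Q`. -/
def Sub.incl {Q : BQuiv} (T : Sub Q) : Hom T.toBQuiv Q where
  onV := Subtype.val
  onE := Subtype.val
  hs _ := rfl
  ht _ := rfl

/-- `T.IsPathIn a b es` : `es` is a path from `a` to `b` lying entirely in the
subquiver `T`. -/
def Sub.IsPathIn {Q : BQuiv} (T : Sub Q) (a b : Q.V) (es : List Q.E) : Prop :=
  a ∈ T.verts ∧ Q.IsPathFrom a b es ∧ ∀ e ∈ es, e ∈ T.edges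

/-- Intersection of subquivers. -/
def Sub.inter {Q : BQuiv} (S T : Sub Q) : Sub Q where
  verts := S.verts ∩ T.verts
  edges := S.edges ∩ T.edges
  src_mem e he := ⟨S.src_mem e he.1, T.src_mem e he.2⟩
  tgt_mem e he := ⟨S.tgt_mem e he.1, T.tgt_mem e he.2⟩

/-- The full subquiver (all of `Q`). -/
def fullSub (Q : BQuiv) : Sub Q where
  verts := Set.univ
  edges := Set.univ
  src_mem _ _ := trivial
  tgt_mem _ _ := trivial

/-- `S ⊆ T` for subquivers. -/
def Sub.le {Q : BQuiv} (S T : Sub Q) : Prop :=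
  S.verts ⊆ T.verts ∧ S.edges ⊆ T.edges

/-- The successor closure of a vertex `j` in a subquiver `U`: the vertices of `U`
reachable from `j` by a path in `U`, together with all arrows of `U` between them. -/
def succClosure {Q : BQuiv} (U : Sub Q) (j : Q.V) : Sub Q where
  verts := {v | ∃ es, U.IsPathIn j v es}
  edges := {e | e ∈ U.edges ∧ (∃ es, U.IsPathIn j (Q.s e) es) ∧ ∃ es, U.IsPathIn j (Q.t e) es}
  src_mem _ he := he.2.1
  tgt_mem _ he := he.2.2

/-- `s₀` is the unique source of the subquiver `S`. -/
def Sub.IsUniqueSource {Q : BQuiv} (S : Sub Q) (s₀ : Q.V) : Prop :=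
  s₀ ∈ S.verts ∧ (∀ e ∈ S.edges, Q.t e ≠ s₀) ∧
    ∀ v ∈ S.verts, (∀ e ∈ S.edges, Q.t e ≠ v) → v = s₀

/-- `u₀` is the unique sink of the subquiver `S`. -/
def Sub.IsUniqueSink {Q : BQuiv} (S : Sub Q) (u₀ : Q.V) : Prop :=
  u₀ ∈ S.verts ∧ (∀ e ∈ S.edges, Q.s e ≠ u₀) ∧
    ∀ v ∈ S.verts, (∀ e ∈ S.edges, Q.s e ≠ v) → v = u₀

/-! ## Path and copath quivers -/

/-- The path quiver `P_{T,t}`: vertices are the paths in `T` starting at `t` (recorded as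
a pair (endpoint, list of edges)); there is one arrow `p ⟶ p·α` for each path-vertex `p`
and each arrow `α` of `T` starting at the endpoint of `p`. -/
def PathQ {Q : BQuiv} (T : Sub Q) (t : Q.V) : BQuiv where
  V := {x : Q.V × List Q.E // T.IsPathIn t x.1 x.2}
  E := {y : (Q.V × List Q.E) × Q.E //
        T.IsPathIn t y.1.1 y.1.2 ∧ y.2 ∈ T.edges ∧ Q.s y.2 = y.1.1}
  s y := ⟨y.1.1, y.2.1⟩
  t y := ⟨(Q.t y.1.2, y.1.1.2 ++ [y.1.2]),
    ⟨y.2.1.1, (y.2.1.2.1).snoc y.2.2.2, by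
      intro e he
      rcases List.mem_append.1 he with h | h
      · exact y.2.1.2.2 e h
      · rw [List.mem_singleton.1 h]; exact y.2.2.1⟩⟩

/-- The structure map of the path quiver `P_{T,t}` as a quiver over `Q`: a path is sent
to its terminal vertex, and the arrow `(p, α)` to `α`. -/
def pathPi {Q : BQuiv} (T : Sub Q) (t : Q.V) : Hom (PathQ T t) Q where
  onV p := p.1.1
  onE y := y.1.2
  hs y := y.2.2.2
  ht _ := rfl

/-- The copath quiver `I_{T,u}`: vertices are the paths in `T` ending at `u` (recorded as
a pair (starting vertex, list of edges)); there is one arrow `α·q ⟶ q` for each vertex `q`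
and each arrow `α` of `T` ending at the starting vertex of `q`. -/
def CoPathQ {Q : BQuiv} (T : Sub Q) (u : Q.V) : BQuiv where
  V := {x : Q.V × List Q.E // T.IsPathIn x.1 u x.2}
  E := {y : Q.E × (Q.V × List Q.E) //
        T.IsPathIn y.2.1 u y.2.2 ∧ y.1 ∈ T.edges ∧ Q.t y.1 = y.2.1}
  s y := ⟨(Q.s y.1.1, y.1.1 :: y.1.2.2),
    ⟨T.src_mem _ y.2.2.1, ⟨rfl, by rw [y.2.2.2]; exact y.2.1.2.1⟩, by
      intro e he
      rcases List.mem_cons.1 he with h | h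
      · rw [h]; exact y.2.2.1
      · exact y.2.1.2.2 e h⟩⟩
  t y := ⟨y.1.2, y.2.1⟩

/-- The structure map of the copath quiver `I_{T,u}` as a quiver over `Q`: a path is sent
to its starting vertex, and the arrow `(α, q)` to `α`. -/
def coPathPi {Q : BQuiv} (T : Sub Q) (u : Q.V) : Hom (CoPathQ T u) Q where
  onV p := p.1.1
  onE y := y.1.1
  hs _ := rfl
  ht y := y.2.2.2

/-! ## Fiber products -/

/-- The fiber product of two quivers over `Q`. -/
def Fib {Q Q' Q'' : BQuiv} (f' : Hom Q' Q) (f'' : Hom Q'' Q) : BQuiv where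
  V := {p : Q'.V × Q''.V // f'.onV p.1 = f''.onV p.2}
  E := {e : Q'.E × Q''.E // f'.onE e.1 = f''.onE e.2}
  s e := ⟨(Q'.s e.1.1, Q''.s e.1.2), by rw [← f'.hs, ← f''.hs, e.2]⟩
  t e := ⟨(Q'.t e.1.1, Q''.t e.1.2), by rw [← f'.ht, ← f''.ht, e.2]⟩

/-- The structure map of the fiber product as a quiver over `Q`. -/
def fibHom {Q Q' Q'' : BQuiv} (f' : Hom Q' Q) (f'' : Hom Q'' Q) : Hom (Fib f' f'') Q where
  onV p := f'.onV p.1.1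
  onE e := f'.onE e.1.1
  hs e := f'.hs e.1.1
  ht e := f'.ht e.1.1

/-! ## Connected components -/

/-- Adjacency in the underlying undirected graph. -/
def Adj (X : BQuiv) (v w : X.V) : Prop :=
  ∃ e : X.E, (X.s e = v ∧ X.t e = w) ∨ (X.s e = w ∧ X.t e = v)

/-- Connectivity in the underlying undirected graph. -/
def Conn (X : BQuiv) : X.V → X.V → Prop :=
  Relation.ReflTransGen (Adj X)

/-- The connected component of the vertex `v₀` in `X`, as a quiver. -/
def Component (X : BQuiv) (v₀ : X.V) : BQuiv where
  V := {v : X.V // Conn X v₀ v}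
  E := {e : X.E // Conn X v₀ (X.s e)}
  s e := ⟨X.s e.1, e.2⟩
  t e := ⟨X.t e.1, e.2.tail ⟨e.1, Or.inl ⟨rfl, rfl⟩⟩⟩

/-- The inclusion of a connected component. -/
def Component.incl (X : BQuiv) (v₀ : X.V) : Hom (Component X v₀) X where
  onV := Subtype.val
  onE := Subtype.val
  hs _ := rfl
  ht _ := rfl

/-- A connected component of a quiver over `Q`, regarded as a quiver over `Q` via the
restricted structure map. -/
def componentHom {X Q : BQuiv} (h : Hom X Q) (v₀ : X.V) : Hom (Component X v₀) Q :=
  (Component.incl X v₀).comp h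

/-! ## Isomorphisms over `Q` and wrappings -/

/-- An isomorphism of quivers over `Q`: a morphism of quivers commuting with the
structure maps which is bijective on vertices and on arrows. -/
structure OverIso {A B Q : BQuiv} (f : Hom A Q) (g : Hom B Q) where
  hom : Hom A B
  comm : hom.comp g = f
  bijV : Function.Bijective hom.onV
  bijE : Function.Bijective hom.onE

/-- A morphism of quivers is a wrapping if it is injective on parallel arrows. -/
def IsWrapping {A B : BQuiv} (f : Hom A B) : Prop :=
  ∀ e₁ e₂ : A.E, A.s e₁ = A.s e₂ → A.t e₁ = A.t e₂ → f.onE e₁ = f.onE e₂ → e₁ = e₂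

/-! ## Linear quivers tracing a path -/

/-- The linear quiver with vertices `0, 1, …, n` and one arrow `k-1 ⟶ k` for `1 ≤ k ≤ n`. -/
def LinQ (n : ℕ) : BQuiv where
  V := Fin (n + 1)
  E := Fin n
  s := Fin.castSucc
  t := Fin.succ

/-- The vertex reached after `k` steps along a list of edges starting at `a`. -/
def vertAt (Q : BQuiv) : Q.V → List Q.E → ℕ → Q.V
  | a, _, 0 => a
  | a, [], _ + 1 => a
  | _, e :: es, k + 1 => vertAt Q (Q.t e) es k

theorem vertAt_s {Q : BQuiv} {a b : Q.V} {es : List Q.E} (h : Q.IsPathFrom a b es)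
    (k : Fin es.length) : Q.s (es.get k) = vertAt Q a es k.1 := by
  induction es generalizing a with
  | nil => exact absurd k.2 (by simp)
  | cons e es ih =>
      obtain ⟨h1, h2⟩ := h
      rcases k with ⟨k, hk⟩
      cases k with
      | zero => exact h1
      | succ k => exact ih h2 ⟨k, Nat.lt_of_succ_lt_succ hk⟩

theorem vertAt_t {Q : BQuiv} {a b : Q.V} {es : List Q.E} (h : Q.IsPathFrom a b es)
    (k : Fin es.length) : Q.t (es.get k) = vertAt Q a es (k.1 + 1) := by
  induction es generalizing a with
  | nil => exact absurd k.2 (by simp)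
  | cons e es ih =>
      obtain ⟨h1, h2⟩ := h
      rcases k with ⟨k, hk⟩
      cases k with
      | zero =>
          cases es with
          | nil => rfl
          | cons f fs => exact (vertAt_s h2 ⟨0, by simp⟩) ▸ (h2.1).symm ▸ rfl
      | succ k => exact ih h2 ⟨k, Nat.lt_of_succ_lt_succ hk⟩

/-- The linear quiver of length `es.length` tracing the path `es` from `a` to `b`,
as a quiver over `Q`. -/
def traceHom (Q : BQuiv) (a b : Q.V) (es : List Q.E) (h : Q.IsPathFrom a b es) :
    Hom (LinQ es.length) Q where
  onV k := vertAt Q a es k.1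
  onE k := es.get k
  hs k := vertAt_s h k
  ht k := vertAt_t h k

end BQuiv

open BQuiv

/-- A vertex `(p, q)` of `P_{Q,i} ×_Q P_{Q,i}` is special if `p` and `q` are either both
trivial or have distinct last arrows. -/
def SpecialVertex (Q : BQuiv) (i : Q.V)
    (v : (Fib (pathPi (fullSub Q) i) (pathPi (fullSub Q) i)).V) : Prop :=
  (v.1.1.1.2 = [] ∧ v.1.2.1.2 = []) ∨
    (v.1.1.1.2 ≠ [] ∧ v.1.2.1.2 ≠ [] ∧ v.1.1.1.2.getLast? ≠ v.1.2.1.2.getLast?)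

/-!
Path quivers have unique lifting of arrows (they are discrete opfibrations over `Q`), every vertex
has at most one incoming arrow, and path length increases along arrows. All three properties pass
to fiber products. For any quiver `X` over `Q` with these properties, descending along the length
produces a source `v` in each component, and each vertex of the component is reached from `v` by
exactly one path, because the only way back from a vertex is along its unique incoming arrow.
So the component is the path quiver of `X` at `v`, which unique lifting identifies with the path
quiver of `Q` at the image of `v`. It remains to recognize the sources of `P ×_Q P`: an arrow into
`(p, q)` exists if and only if `p` and `q` end in the same arrow.
-/

namespace BQuiv

section Paths

variable {A B : BQuiv} {a b c : A.V} {es fs : List A.E} {e : A.E}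

theorem isPathFrom_append_iff :
    A.IsPathFrom a c (es ++ fs) ↔ ∃ b, A.IsPathFrom a b es ∧ A.IsPathFrom b c fs := by
  refine ⟨fun h => ?_, fun ⟨_, h, h'⟩ => h.append h'⟩
  induction es generalizing a with
  | nil => exact ⟨a, rfl, h⟩
  | cons f es ih =>
    obtain ⟨b, hes, hfs⟩ := ih h.2
    exact ⟨b, ⟨h.1, hes⟩, hfs⟩

theorem isPathFrom_concat_iff :
    A.IsPathFrom a c (es ++ [e]) ↔ A.IsPathFrom a (A.s e) es ∧ A.t e = c := by
  refine isPathFrom_append_iff.trans ⟨?_, fun ⟨h, hc⟩ => ⟨_, h, rfl, hc⟩⟩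
  rintro ⟨_, h, rfl, hc⟩
  exact ⟨h, hc⟩

theorem IsPathFrom.target_unique (h : A.IsPathFrom a b es) (h' : A.IsPathFrom a c es) :
    b = c := by
  induction es generalizing a with
  | nil => exact h.symm.trans h'
  | cons f es ih => exact ih h.2 h'.2

theorem IsPathFrom.map (f : Hom A B) (h : A.IsPathFrom a b es) :
    B.IsPathFrom (f.onV a) (f.onV b) (es.map f.onE) := by
  induction es generalizing a with
  | nil => exact congrArg f.onV h
  | cons e es ih => exact ⟨(f.hs e).trans (congrArg f.onV h.1), f.ht e ▸ ih h.2⟩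

end Paths

section Subquivers

variable {Q : BQuiv} {T : Sub Q} {a b : Q.V} {es : List Q.E}

theorem Sub.IsPathIn.target_mem (h : T.IsPathIn a b es) : b ∈ T.verts := by
  obtain ⟨ha, h, hes⟩ := h
  rcases List.eq_nil_or_concat' es with rfl | ⟨es, e, rfl⟩
  · exact (show a = b from h) ▸ ha
  · exact (isPathFrom_concat_iff.1 h).2 ▸ T.tgt_mem e (hes e (by simp))

/-- A subquiver is closed under successors if it contains every arrow of the ambient quiver that
starts in it (hence also the target of that arrow). -/
def Sub.IsSuccClosed (T : Sub Q) : Prop :=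
  ∀ e, Q.s e ∈ T.verts → e ∈ T.edges

theorem isSuccClosed_fullSub (Q : BQuiv) : (fullSub Q).IsSuccClosed :=
  fun _ _ => trivial

theorem Sub.IsSuccClosed.isPathIn (hT : T.IsSuccClosed) (ha : a ∈ T.verts)
    (h : Q.IsPathFrom a b es) : T.IsPathIn a b es := by
  refine ⟨ha, h, ?_⟩
  induction es generalizing a with
  | nil => simp
  | cons e es ih =>
    have he : e ∈ T.edges := hT e (h.1 ▸ ha)
    exact List.forall_mem_cons.2 ⟨he, ih (T.tgt_mem e he) h.2⟩

theorem Sub.IsSuccClosed.succClosure (hT : T.IsSuccClosed) (j : Q.V) :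
    (succClosure T j).IsSuccClosed := by
  rintro e ⟨es, hes⟩
  exact ⟨hT e hes.target_mem, ⟨es, hes⟩,
    es ++ [e], hT.isPathIn hes.1 (hes.2.1.snoc rfl)⟩

theorem mem_succClosure_self (ha : a ∈ T.verts) : a ∈ (succClosure T a).verts :=
  ⟨[], ha, rfl, by simp⟩

end Subquivers

section DiscreteOpfibrations

variable {A B C : BQuiv}

/-- A morphism of quivers is a discrete opfibration if every arrow starting at the image of a
vertex `v` lifts to a unique arrow starting at `v`. -/
def Hom.IsDiscreteOpfibration (f : Hom A B) : Prop :=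
  ∀ v e, B.s e = f.onV v → ∃! e', A.s e' = v ∧ f.onE e' = e

namespace Hom.IsDiscreteOpfibration

variable {f : Hom A B} {g : Hom B C}

theorem arrow_ext (hf : f.IsDiscreteOpfibration) {e₁ e₂ : A.E} (hs : A.s e₁ = A.s e₂)
    (he : f.onE e₁ = f.onE e₂) : e₁ = e₂ :=
  (hf (A.s e₂) (f.onE e₂) (f.hs e₂)).unique ⟨hs, he⟩ ⟨rfl, rfl⟩

theorem comp (hg : g.IsDiscreteOpfibration) (hf : f.IsDiscreteOpfibration) :
    (f.comp g).IsDiscreteOpfibration := by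
  intro v e he
  obtain ⟨e', ⟨hs, rfl⟩, -⟩ := hg (f.onV v) e he
  obtain ⟨e'', ⟨rfl, rfl⟩, -⟩ := hf v e' hs
  refine ⟨e'', ⟨rfl, rfl⟩, fun y ⟨hys, hy⟩ => hf.arrow_ext hys (hg.arrow_ext ?_ hy)⟩
  rw [f.hs, f.hs, hys]

theorem of_comp (hg : g.IsDiscreteOpfibration) (hfg : (f.comp g).IsDiscreteOpfibration) :
    f.IsDiscreteOpfibration := by
  intro v e he
  obtain ⟨e', ⟨rfl, he'⟩, -⟩ := hfg v (g.onE e) ((g.hs e).trans (congrArg g.onV he))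
  exact ⟨e', ⟨rfl, hg.arrow_ext ((f.hs e').trans he.symm) he'⟩,
    fun y ⟨hys, hy⟩ => hfg.arrow_ext hys ((congrArg g.onE hy).trans he'.symm)⟩

theorem bijective_onE (hf : f.IsDiscreteOpfibration) (hV : f.onV.Bijective) :
    f.onE.Bijective := by
  refine ⟨fun e₁ e₂ he => hf.arrow_ext (hV.1 ?_) he, fun e => ?_⟩
  · rw [← f.hs, ← f.hs, he]
  · obtain ⟨v, hv⟩ := hV.2 (B.s e)
    obtain ⟨e', ⟨-, he'⟩, -⟩ := hf v e hv.symm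
    exact ⟨e', he'⟩

theorem exists_lift (hf : f.IsDiscreteOpfibration) {x : A.V} {b : B.V} {es : List B.E}
    (h : B.IsPathFrom (f.onV x) b es) :
    ∃ y es', A.IsPathFrom x y es' ∧ es'.map f.onE = es := by
  induction es generalizing x with
  | nil => exact ⟨x, [], rfl, rfl⟩
  | cons e es ih =>
    obtain ⟨e', ⟨hs, rfl⟩, -⟩ := hf x e h.1
    obtain ⟨y, es', hes', rfl⟩ := ih (x := A.t e') (f.ht e' ▸ h.2)
    exact ⟨y, e' :: es', ⟨hs, hes'⟩, rfl⟩

theorem lift_unique (hf : f.IsDiscreteOpfibration) {x y z : A.V} {es fs : List A.E}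
    (hes : A.IsPathFrom x y es) (hfs : A.IsPathFrom x z fs)
    (h : es.map f.onE = fs.map f.onE) : es = fs := by
  induction es generalizing x fs with
  | nil => exact (List.map_eq_nil_iff.1 h.symm).symm
  | cons e es ih =>
    obtain ⟨e', fs, rfl, he, htail⟩ := List.map_eq_cons_iff.1 h.symm
    obtain rfl : e = e' := hf.arrow_ext (hes.1.trans hfs.1.symm) he.symm
    rw [ih hes.2 hfs.2 htail.symm]

theorem fibHom {Q Q' Q'' : BQuiv} {f' : Hom Q' Q} {f'' : Hom Q'' Q}
    (hf' : f'.IsDiscreteOpfibration) (hf'' : f''.IsDiscreteOpfibration) :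
    (fibHom f' f'').IsDiscreteOpfibration := by
  rintro ⟨⟨v', v''⟩, hv⟩ e he
  obtain ⟨e', ⟨hs', rfl⟩, -⟩ := hf' v' e he
  obtain ⟨e'', ⟨hs'', he''⟩, -⟩ := hf'' v'' (f'.onE e') (he.trans hv)
  refine ⟨⟨(e', e''), he''.symm⟩, ⟨Subtype.ext (Prod.ext hs' hs''), rfl⟩, ?_⟩
  rintro ⟨⟨d', d''⟩, hd⟩ ⟨hds, hd'⟩
  obtain ⟨hds', hds''⟩ := Prod.ext_iff.1 (congrArg Subtype.val hds)
  exact Subtype.ext (Prod.ext (hf'.arrow_ext (hds'.trans hs'.symm) hd')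
    (hf''.arrow_ext (hds''.trans hs''.symm) (hd.symm.trans (hd'.trans he''.symm))))

end Hom.IsDiscreteOpfibration

theorem Component.isDiscreteOpfibration_incl (X : BQuiv) (v₀ : X.V) :
    (Component.incl X v₀).IsDiscreteOpfibration := by
  rintro ⟨_, hv⟩ e rfl
  exact ⟨⟨e, hv⟩, ⟨rfl, rfl⟩, fun _ ⟨_, he⟩ => Subtype.ext he⟩

end DiscreteOpfibrations

section Sources

variable {X : BQuiv} {v w v₀ : X.V} {es fs : List X.E}

theorem Conn.symm (h : Conn X v w) : Conn X w v := by
  have : Std.Symm (Adj X) := ⟨fun _ _ ⟨e, he⟩ => ⟨e, he.symm⟩⟩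
  exact symm_of (Relation.ReflTransGen (Adj X)) h

theorem IsPathFrom.conn (h : X.IsPathFrom v w es) : Conn X v w := by
  induction es generalizing v with
  | nil => exact (show v = w from h) ▸ .refl
  | cons e es ih => exact .head ⟨e, .inl ⟨h.1, rfl⟩⟩ (ih h.2)

/-- A source of a quiver: a vertex with no incoming arrows. -/
def IsSource (X : BQuiv) (v : X.V) : Prop :=
  ∀ e, X.t e ≠ v

theorem exists_conn_isSource {α : Type*} [Preorder α] [WellFoundedLT α] (rank : X.V → α)
    (hrank : ∀ e, rank (X.s e) < rank (X.t e)) (v₀ : X.V) :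
    ∃ v, Conn X v₀ v ∧ X.IsSource v := by
  obtain ⟨v, hv, hmin⟩ := exists_minimalFor_of_wellFoundedLT (Conn X v₀) rank ⟨v₀, .refl⟩
  refine ⟨v, hv, ?_⟩
  rintro e rfl
  exact (hrank e).not_ge (hmin (hv.tail ⟨e, .inr ⟨rfl, rfl⟩⟩) (hrank e).le)

theorem IsSource.eq_nil_of_isPathFrom (hw : X.IsSource w) (h : X.IsPathFrom v w es) :
    es = [] := by
  rcases List.eq_nil_or_concat' es with rfl | ⟨es, e, rfl⟩
  · rfl
  · exact (hw e (isPathFrom_concat_iff.1 h).2).elim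

theorem IsSource.exists_isPathFrom_of_conn (hv : X.IsSource v) (ht : X.t.Injective)
    (h : Conn X v w) : ∃ es, X.IsPathFrom v w es := by
  induction h with
  | refl => exact ⟨[], rfl⟩
  | tail _ hadj ih =>
    obtain ⟨es, hes⟩ := ih
    obtain ⟨e, ⟨hs, rfl⟩ | ⟨rfl, he⟩⟩ := hadj
    · exact ⟨es ++ [e], hes.snoc hs⟩
    · rcases List.eq_nil_or_concat' es with rfl | ⟨es, f, rfl⟩
      · exact (hv e (he.trans hes.symm)).elim
      · obtain ⟨hes, hf⟩ := isPathFrom_concat_iff.1 hes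
        obtain rfl : e = f := ht (he.trans hf.symm)
        exact ⟨es, hes⟩

theorem IsSource.isPathFrom_unique (hv : X.IsSource v) (ht : X.t.Injective)
    (hes : X.IsPathFrom v w es) (hfs : X.IsPathFrom v w fs) : es = fs := by
  induction es using List.reverseRecOn generalizing w fs with
  | nil =>
    obtain rfl : v = w := hes
    exact (hv.eq_nil_of_isPathFrom hfs).symm
  | append_singleton es e ih =>
    obtain ⟨hes', he⟩ := isPathFrom_concat_iff.1 hes
    rcases List.eq_nil_or_concat' fs with rfl | ⟨fs, f, rfl⟩
    · exact (hv e (he.trans hfs.symm)).elim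
    · obtain ⟨hfs', hf⟩ := isPathFrom_concat_iff.1 hfs
      obtain rfl : f = e := ht (hf.trans he.symm)
      rw [ih hes' hfs']

theorem IsSource.eq_of_conn (hv : X.IsSource v) (hw : X.IsSource w) (ht : X.t.Injective)
    (h : Conn X v w) : w = v := by
  obtain ⟨es, hes⟩ := hv.exists_isPathFrom_of_conn ht h
  obtain rfl := hw.eq_nil_of_isPathFrom hes
  exact hes.symm

end Sources

theorem Fib.injective_t {Q Q' Q'' : BQuiv} {f' : Hom Q' Q} {f'' : Hom Q'' Q}
    (h' : Q'.t.Injective) (h'' : Q''.t.Injective) : (Fib f' f'').t.Injective := by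
  intro d e h
  obtain ⟨ht', ht''⟩ := Prod.ext_iff.1 (congrArg Subtype.val h)
  exact Subtype.ext (Prod.ext (h' ht') (h'' ht''))

section PathQuivers

variable {Q : BQuiv} {T : Sub Q} {a : Q.V}

theorem PathQ.vertex_ext {p q : (PathQ T a).V} (h : p.1.2 = q.1.2) : p = q :=
  Subtype.ext (Prod.ext (p.2.2.1.target_unique (h ▸ q.2.2.1)) h)

theorem PathQ.injective_t (T : Sub Q) (a : Q.V) : (PathQ T a).t.Injective := by
  intro y z h
  have hlist : y.1.1.2 ++ [y.1.2] = z.1.1.2 ++ [z.1.2] := congrArg (fun p => p.1.2) h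
  obtain ⟨hes, he⟩ := List.append_inj' hlist rfl
  have hs : (PathQ T a).s y = (PathQ T a).s z := vertex_ext hes
  exact Subtype.ext (Prod.ext (congrArg Subtype.val hs) (List.singleton_inj.1 he))

theorem PathQ.length_s_lt_length_t (y : (PathQ T a).E) :
    ((PathQ T a).s y).1.2.length < ((PathQ T a).t y).1.2.length := by
  simp [PathQ]

theorem PathQ.exists_arrow_to_iff {p : (PathQ T a).V} {e : Q.E} :
    (∃ y, (PathQ T a).t y = p ∧ (pathPi T a).onE y = e) ↔ p.1.2.getLast? = some e := by
  rw [List.getLast?_eq_some_iff]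
  constructor
  · rintro ⟨y, rfl, rfl⟩
    exact ⟨y.1.1.2, rfl⟩
  · rintro ⟨es, hes⟩
    obtain ⟨ha, hp, hT⟩ := p.2
    rw [hes] at hp hT
    exact ⟨⟨((Q.s e, es), e), ⟨ha, (isPathFrom_concat_iff.1 hp).1,
      fun f hf => hT f (by simp [hf])⟩, hT e (by simp), rfl⟩, vertex_ext hes.symm, rfl⟩

theorem Sub.IsSuccClosed.isDiscreteOpfibration_pathPi (hT : T.IsSuccClosed) (a : Q.V) :
    (pathPi T a).IsDiscreteOpfibration := by
  rintro p e he
  refine ⟨⟨(p.1, e), p.2, hT e (he ▸ p.2.target_mem), he⟩, ⟨rfl, rfl⟩, ?_⟩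
  rintro y ⟨rfl, rfl⟩
  rfl

theorem isSource_fib_pathPi_iff {T' : Sub Q} {a' : Q.V}
    {v : (Fib (pathPi T a) (pathPi T' a')).V} :
    (Fib (pathPi T a) (pathPi T' a')).IsSource v ↔
      ∀ e, v.1.1.1.2.getLast? = some e → v.1.2.1.2.getLast? ≠ some e := by
  simp only [Ne, ← PathQ.exists_arrow_to_iff]
  constructor
  · rintro h _ ⟨y, hy, rfl⟩ ⟨z, hz, he⟩
    exact h ⟨(y, z), he.symm⟩ (Subtype.ext (Prod.ext hy hz))
  · rintro h y rfl
    exact h _ ⟨y.1.1, rfl, rfl⟩ ⟨y.1.2, rfl, y.2.symm⟩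

end PathQuivers

section Isomorphisms

variable {Q X : BQuiv}

/-- The inverse of an isomorphism of quivers over `Q`. -/
noncomputable def OverIso.symm {A B : BQuiv} {f : Hom A Q} {g : Hom B Q} (φ : OverIso f g) :
    OverIso g f :=
  let eV := Equiv.ofBijective _ φ.bijV
  let eE := Equiv.ofBijective _ φ.bijE
  have hV : ∀ x, φ.hom.onV (eV.symm x) = x := eV.apply_symm_apply
  have hE : ∀ x, φ.hom.onE (eE.symm x) = x := eE.apply_symm_apply
  { hom :=
      { onV := eV.symm
        onE := eE.symm
        hs := fun e => φ.bijV.1 (by rw [← φ.hom.hs, hE, hV])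
        ht := fun e => φ.bijV.1 (by rw [← φ.hom.ht, hE, hV]) }
    comm := (congrArg (Hom.comp _) φ.comm.symm).trans
      (Hom.ext (funext fun x => congrArg g.onV (hV x)) (funext fun x => congrArg g.onE (hE x)))
    bijV := eV.symm.bijective
    bijE := eE.symm.bijective }

/-- The composite of two isomorphisms of quivers over `Q`. -/
def OverIso.trans {A B C : BQuiv} {f : Hom A Q} {g : Hom B Q} {h : Hom C Q}
    (φ : OverIso f g) (ψ : OverIso g h) : OverIso f h where
  hom := φ.hom.comp ψ.hom
  comm := (congrArg φ.hom.comp ψ.comm).trans φ.comm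
  bijV := ψ.bijV.comp φ.bijV
  bijE := ψ.bijE.comp φ.bijE

/-- The morphism `P_{S,a} ⟶ P_{T,f(a)}` that applies `f` to paths; these stay in `T` because `T` is
closed under successors. -/
def PathQ.map (f : Hom X Q) (S : Sub X) {T : Sub Q} {a : X.V} (hT : T.IsSuccClosed)
    (ha : f.onV a ∈ T.verts) : Hom (PathQ S a) (PathQ T (f.onV a)) where
  onV p := ⟨(f.onV p.1.1, p.1.2.map f.onE), hT.isPathIn ha (p.2.2.1.map f)⟩
  onE y :=
    have hp := hT.isPathIn ha (y.2.1.2.1.map f)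
    have hs := (f.hs y.1.2).trans (congrArg f.onV y.2.2.2)
    ⟨((f.onV y.1.1.1, y.1.1.2.map f.onE), f.onE y.1.2), hp, hT _ (hs ▸ hp.target_mem), hs⟩
  hs _ := rfl
  ht _ := PathQ.vertex_ext (by simp [PathQ])

theorem Hom.IsDiscreteOpfibration.bijective_onV_pathQMap {f : Hom X Q}
    (hf : f.IsDiscreteOpfibration) {S : Sub X} {T : Sub Q} {a : X.V} (hS : S.IsSuccClosed)
    (hT : T.IsSuccClosed) (haS : a ∈ S.verts) (haT : f.onV a ∈ T.verts) :
    (PathQ.map f S hT haT).onV.Bijective := by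
  refine ⟨fun p q h => ?_, fun q => ?_⟩
  · exact PathQ.vertex_ext (hf.lift_unique p.2.2.1 q.2.2.1 (congrArg (fun r => r.1.2) h))
  · obtain ⟨y, es, hes, hq⟩ := hf.exists_lift q.2.2.1
    exact ⟨⟨(y, es), hS.isPathIn haS hes⟩, PathQ.vertex_ext hq⟩

/-- A discrete opfibration `f : X ⟶ Q` identifies the path quiver of `X` at `a` with that of `Q`
at `f(a)`. -/
def Hom.IsDiscreteOpfibration.pathQOverIso {f : Hom X Q}
    (hf : f.IsDiscreteOpfibration) {S : Sub X} {T : Sub Q} {a : X.V} (hS : S.IsSuccClosed)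
    (hT : T.IsSuccClosed) (haS : a ∈ S.verts) (haT : f.onV a ∈ T.verts) :
    OverIso ((pathPi S a).comp f) (pathPi T (f.onV a)) :=
  have hmap : (PathQ.map f S hT haT).IsDiscreteOpfibration :=
    (hT.isDiscreteOpfibration_pathPi _).of_comp (hf.comp (hS.isDiscreteOpfibration_pathPi a))
  have hV := hf.bijective_onV_pathQMap hS hT haS haT
  ⟨PathQ.map f S hT haT, rfl, hV, hmap.bijective_onE hV⟩

/-- The morphism from the path quiver of `X` at `v` to the component of `v` that sends a path to
its terminal vertex. -/
def PathQ.toComponent {v v₀ : X.V} (S : Sub X) (hv : Conn X v₀ v) :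
    Hom (PathQ S v) (Component X v₀) where
  onV p := ⟨p.1.1, hv.trans p.2.2.1.conn⟩
  onE y := ⟨y.1.2, y.2.2.2 ▸ hv.trans y.2.1.2.1.conn⟩
  hs y := Subtype.ext y.2.2.2
  ht _ := rfl

theorem IsSource.bijective_onV_toComponent {v v₀ : X.V} (hv : X.IsSource v)
    (ht : X.t.Injective) (hc : Conn X v₀ v) :
    (PathQ.toComponent (fullSub X) hc).onV.Bijective := by
  refine ⟨fun p q h => ?_, fun ⟨w, hw⟩ => ?_⟩
  · have hpq : p.1.1 = q.1.1 := congrArg Subtype.val h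
    exact PathQ.vertex_ext (hv.isPathFrom_unique ht p.2.2.1 (hpq ▸ q.2.2.1))
  · obtain ⟨es, hes⟩ := hv.exists_isPathFrom_of_conn ht (hc.symm.trans hw)
    exact ⟨⟨(w, es), (isSuccClosed_fullSub X).isPathIn trivial hes⟩, rfl⟩

/-- If every vertex of `X` has at most one incoming arrow, then the component of a source `v` is
the path quiver of `X` at `v`. -/
def IsSource.componentOverIso {v v₀ : X.V} (hv : X.IsSource v) (ht : X.t.Injective)
    (hc : Conn X v₀ v) (h : Hom X Q) :
    OverIso ((pathPi (fullSub X) v).comp h) (componentHom h v₀) :=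
  have hend : (PathQ.toComponent (fullSub X) hc).IsDiscreteOpfibration :=
    (Component.isDiscreteOpfibration_incl X v₀).of_comp
      ((isSuccClosed_fullSub X).isDiscreteOpfibration_pathPi v)
  have hV := hv.bijective_onV_toComponent ht hc
  ⟨PathQ.toComponent (fullSub X) hc, rfl, hV, hend.bijective_onE hV⟩

theorem IsSource.nonempty_overIso_componentHom_pathPi {v v₀ : X.V} {h : Hom X Q}
    {W : Sub Q} (hv : X.IsSource v) (ht : X.t.Injective) (hc : Conn X v₀ v)
    (hh : h.IsDiscreteOpfibration) (hW : W.IsSuccClosed) (hj : h.onV v ∈ W.verts) :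
    Nonempty (OverIso (componentHom h v₀) (pathPi W (h.onV v))) :=
  ⟨(hv.componentOverIso ht hc h).symm.trans
    (hh.pathQOverIso (isSuccClosed_fullSub X) hW trivial hj)⟩

end Isomorphisms

/-- The fiber square `P_{Q,i} ×_Q P_{Q,i}`. -/
abbrev PathSquare (Q : BQuiv) (i : Q.V) : BQuiv :=
  Fib (pathPi (fullSub Q) i) (pathPi (fullSub Q) i)

theorem specialVertex_iff_isSource {Q : BQuiv} {i : Q.V}
    (hi : ∀ es, Q.IsPathFrom i i es → es = []) {v : (PathSquare Q i).V} :
    SpecialVertex Q i v ↔ (PathSquare Q i).IsSource v := by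
  rw [isSource_fib_pathPi_iff]
  obtain ⟨⟨⟨⟨j, p⟩, -, hp, -⟩, ⟨⟨j', q⟩, -, hq, -⟩⟩, hjj'⟩ := v
  obtain rfl : j = j' := hjj'
  -- Both paths end at `j`, so if one of them is trivial, then the other is a closed path at `i`.
  have hnil : p = [] ↔ q = [] := by
    constructor <;> rintro rfl
    · exact hi q (hp ▸ hq)
    · exact hi p (hq ▸ hp)
  rcases List.eq_nil_or_concat' p with rfl | ⟨p, e, rfl⟩ <;>
    rcases List.eq_nil_or_concat' q with rfl | ⟨q, f, rfl⟩
  · simp [SpecialVertex]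
  · simp at hnil
  · simp at hnil
  · simpa [SpecialVertex] using ne_comm

end BQuiv

theorem component_pathQuiver_prod_self_general
    (Q : BQuiv) (i : Q.V) (hi : ∀ es, Q.IsPathFrom i i es → es = []) :
    ∀ v₀ : (PathSquare Q i).V,
      ∃ v : (PathSquare Q i).V,
        (Conn (PathSquare Q i) v₀ v ∧ SpecialVertex Q i v) ∧
        (∀ v', Conn (PathSquare Q i) v₀ v' → SpecialVertex Q i v' → v' = v) ∧
        (PathSquare Q i).IsSource v ∧
        (∀ v', Conn (PathSquare Q i) v₀ v' → (PathSquare Q i).IsSource v' → v' = v) ∧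
        Nonempty
          (OverIso
            (componentHom (fibHom (pathPi (fullSub Q) i) (pathPi (fullSub Q) i)) v₀)
            (pathPi (succClosure (fullSub Q) v.1.1.1.1) v.1.1.1.1)) := by
  intro v₀
  have hQ := isSuccClosed_fullSub Q
  have ht := PathQ.injective_t (fullSub Q) i
  have htP : (PathSquare Q i).t.Injective := Fib.injective_t ht ht
  have hlift := hQ.isDiscreteOpfibration_pathPi i
  obtain ⟨v, hc, hv⟩ :=
    exists_conn_isSource (X := PathSquare Q i)
      (fun v => v.1.1.1.2.length) (fun e => PathQ.length_s_lt_length_t e.1.1) v₀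
  have huniq v' (h : Conn _ v₀ v') (hv' : IsSource _ v') : v' = v :=
    hv.eq_of_conn hv' htP (hc.symm.trans h)
  refine ⟨v, ⟨hc, (specialVertex_iff_isSource hi).2 hv⟩,
    fun v' h hv' => huniq v' h ((specialVertex_iff_isSource hi).1 hv'), hv, huniq, ?_⟩
  exact hv.nonempty_overIso_componentHom_pathPi htP hc (hlift.fibHom hlift)
    (hQ.succClosure _) (mem_succClosure_self trivial)

/-- Every connected component of `P_{Q,i} ×_Q P_{Q,i}` contains exactly
one vertex `(p, q)` with `p, q` either both trivial or with distinct last arrows; this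
vertex is the unique source of its component, and the component is isomorphic over `Q` to
`P_{W,j}` where `j` is the common terminal vertex of `p` and `q` and `W` is the successor
closure of `j` in `Q`. -/
theorem component_pathQuiver_prod_self
    (Q : BQuiv) [Fintype Q.V] [Fintype Q.E] (hQ : Q.IsAcyclic) (i : Q.V) :
    ∀ v₀ : (Fib (pathPi (fullSub Q) i) (pathPi (fullSub Q) i)).V,
      ∃ v : (Fib (pathPi (fullSub Q) i) (pathPi (fullSub Q) i)).V,
        (Conn (Fib (pathPi (fullSub Q) i) (pathPi (fullSub Q) i)) v₀ v ∧
          SpecialVertex Q i v) ∧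
        (∀ v', Conn (Fib (pathPi (fullSub Q) i) (pathPi (fullSub Q) i)) v₀ v' →
          SpecialVertex Q i v' → v' = v) ∧
        (∀ e : (Fib (pathPi (fullSub Q) i) (pathPi (fullSub Q) i)).E,
          (Fib (pathPi (fullSub Q) i) (pathPi (fullSub Q) i)).t e ≠ v) ∧
        (∀ v', Conn (Fib (pathPi (fullSub Q) i) (pathPi (fullSub Q) i)) v₀ v' →
          (∀ e : (Fib (pathPi (fullSub Q) i) (pathPi (fullSub Q) i)).E,
            (Fib (pathPi (fullSub Q) i) (pathPi (fullSub Q) i)).t e ≠ v') → v' = v) ∧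
        Nonempty
          (OverIso
            (componentHom (fibHom (pathPi (fullSub Q) i) (pathPi (fullSub Q) i)) v₀)
            (pathPi (succClosure (fullSub Q) v.1.1.1.1) v.1.1.1.1)) :=
  component_pathQuiver_prod_self_general Q i (hQ i)
end
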